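/- Let S be a real symmetric d×d matrix of full rank with exactly m positive eigenvalues and ν a Borel probability measure on ℝ^d with finite second moment. If the support of ν is bounded or convex, then the dual problem has a unique solution over supp(ν): for any two optimal maximal S-monotone sets G and G̃, ψ_G(y) = ψ_{G̃}(y) for all y ∈ supp(ν) and G ∩ supp(ν) = G̃ ∩ supp(ν). In particular, if supp(ν) is convex and there exists an optimal set G contained in supp(ν), then G is the unique optimal set. -/

import Mathlib

/-! The proof is a convexity argument on the dual side alone. Write `e_G = ψ_G - ½S`, which is
nonnegative for maximal `G` and vanishes exactly on `G`.

*Every convex function above `½S` dominates a Fitzpatrick function.* Any convex set in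
`ℝ^d × ℝ` above the graph of `½S` lies in the epigraph of `ψ_H` for some maximal `S`-monotone `H`
(`exists_maxSMono_below`). By Zorn's lemma the convex set may be taken maximal, and `H` consists
of the points where it touches the graph; a Hahn-Banach separation (`exists_affine_minorant`)
yields enough such points for `H` to be maximal. Thus the dual problem amounts to minimizing
`∫ f dν` over convex `f ≥ ½S`.

*Almost everywhere uniqueness* (`DualOpt.ae_eq_and_le`). Let `G`, `G'` be optimal, `V` the dual
value, `C` a convex set of full measure, and
`k_j(y) = sup_{x ∈ C} (S(x,y) - ½S(x,x) - j (e_G + e_{G'})(x))`. The convex function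
`(k_j + j(ψ_G + ψ_{G'}))/(2j+1)` is at least `½S` on `C`, so `∫ k_j dν ≥ V`. On the other hand,
the inequality `ψ_G ≥ ½S` at convex combinations gives `k_j ≤ ψ_G + e_G/(j-1)`, and likewise for
`G'` (`MaxSMono.penalty_le`). Since `k_j` is nonincreasing in `j`, letting `j → ∞` gives
`V ≤ ∫ min(k_m, ψ_G, ψ_{G'}) dν` for every `m`, and hence `ψ_G = ψ_{G'} ≤ k_m` a.e.

*From almost everywhere to the support.* If the support is bounded, take `C` to be its convex
hull: the `k_m` are suprema of equi-Lipschitz functions, so that the inequalities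
`ψ_G ≤ k_m ≤ ψ_{G'} + e_{G'}/(m-1)` pass to the limit (`DualOpt.fitz_le_of_bounded`). If it is
convex, `ψ_{G'}` is bounded on a relatively open part, and every point of the support is
approached along segments from that part (`DualOpt.fitz_le_of_convex`). Equality of the sets on
the support follows since `y ∈ G` if and only if `ψ_G(y) ≤ ½S(y,y)`.
-/

open MeasureTheory Filter Set Matrix

noncomputable section

/-- The bilinear form of the matrix `S`: `S(x,y) = ⟨x, Sy⟩`. -/
def Sb {d : ℕ} (S : Matrix (Fin d) (Fin d) ℝ) (x y : Fin d → ℝ) : ℝ :=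
  x ⬝ᵥ S.mulVec y

/-- A set `G` is `S`-monotone if `S(x-y,x-y) ≥ 0` for all `x, y ∈ G`. -/
def SMono {d : ℕ} (S : Matrix (Fin d) (Fin d) ℝ) (G : Set (Fin d → ℝ)) : Prop :=
  ∀ x ∈ G, ∀ y ∈ G, 0 ≤ Sb S (x - y) (x - y)

/-- Maximal `S`-monotone set. -/
def MaxSMono {d : ℕ} (S : Matrix (Fin d) (Fin d) ℝ) (G : Set (Fin d → ℝ)) : Prop :=
  SMono S G ∧ ∀ H, SMono S H → G ⊆ H → H = G

/-- The Fitzpatrick function `ψ_G(y) = sup_{x∈G} (S(x,y) - S(x,x)/2)`, with values in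
`ℝ ∪ {+∞}` (modeled in `EReal`). -/
def fitz {d : ℕ} (S : Matrix (Fin d) (Fin d) ℝ) (G : Set (Fin d → ℝ))
    (y : Fin d → ℝ) : EReal :=
  ⨆ x ∈ G, ((Sb S x y - Sb S x x / 2 : ℝ) : EReal)

/-- Positive part of an extended real number, in `ℝ≥0∞`. -/
def epos (x : EReal) : ENNReal := if x = ⊤ then ⊤ else ENNReal.ofReal x.toReal

/-- Integral of an `EReal`-valued function: positive part minus negative part. -/
def eInt {α : Type*} [MeasurableSpace α] (μ : Measure α) (f : α → EReal) : EReal :=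
  ((∫⁻ a, epos (f a) ∂μ : ENNReal) : EReal) - ((∫⁻ a, epos (-(f a)) ∂μ : ENNReal) : EReal)

/-- The martingale property of a measure `γ(dx,dy)` on `ℝ^d × ℝ^d`: the conditional
expectation of `y` given `x` equals `x`, `γ`-a.s. -/
def MartProp {d : ℕ} (γ : Measure ((Fin d → ℝ) × (Fin d → ℝ))) : Prop :=
  γ[(fun p => p.2) | MeasurableSpace.comap Prod.fst inferInstance] =ᵐ[γ] fun p => p.1

/-- `γ ∈ Γ(ν)`: probability measures on `ℝ^d × ℝ^d` with finite second moment,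
`y`-marginal `ν` and the martingale property. -/
def MGamma {d : ℕ} (ν : Measure (Fin d → ℝ))
    (γ : Measure ((Fin d → ℝ) × (Fin d → ℝ))) : Prop :=
  IsProbabilityMeasure γ ∧ γ.map Prod.snd = ν ∧
    Integrable (fun p => ‖p.1‖ ^ 2 + ‖p.2‖ ^ 2) γ ∧ MartProp γ

/-- Value of the primal problem: `(1/2) ∫ S(x,y) dγ`. -/
def primalVal {d : ℕ} (S : Matrix (Fin d) (Fin d) ℝ)
    (γ : Measure ((Fin d → ℝ) × (Fin d → ℝ))) : ℝ :=
  (1 / 2) * ∫ p, Sb S p.1 p.2 ∂γ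

/-- `γ` is an optimal plan for the primal problem. -/
def PrimalOpt {d : ℕ} (S : Matrix (Fin d) (Fin d) ℝ) (ν : Measure (Fin d → ℝ))
    (γ : Measure ((Fin d → ℝ) × (Fin d → ℝ))) : Prop :=
  MGamma ν γ ∧ ∀ γ', MGamma ν γ' → primalVal S γ' ≤ primalVal S γ

/-- `G` is an optimal set for the dual problem: minimize `∫ ψ_G dν` over maximal
`S`-monotone sets. -/
def DualOpt {d : ℕ} (S : Matrix (Fin d) (Fin d) ℝ) (ν : Measure (Fin d → ℝ))
    (G : Set (Fin d → ℝ)) : Prop :=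
  MaxSMono S G ∧ ∀ H, MaxSMono S H → eInt ν (fitz S G) ≤ eInt ν (fitz S H)

/-- The support of a measure: points all of whose neighborhoods have positive measure. -/
def msupp {α : Type*} [TopologicalSpace α] [MeasurableSpace α] (μ : Measure α) : Set α :=
  {x | ∀ U ∈ nhds x, μ U ≠ 0}

/-- The `S`-projection on `G`: minimizers over `G` of `z ↦ S(z-y,z-y)`. -/
def SProj {d : ℕ} (S : Matrix (Fin d) (Fin d) ℝ) (G : Set (Fin d → ℝ))
    (y : Fin d → ℝ) : Set (Fin d → ℝ) :=
  {x ∈ G | ∀ z ∈ G, Sb S (x - y) (x - y) ≤ Sb S (z - y) (z - y)}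

/-- The inverse image of the projection: `P_G^{-1}(x) = {y : x ∈ P_G(y)}`. -/
def SProjInv {d : ℕ} (S : Matrix (Fin d) (Fin d) ℝ) (G : Set (Fin d → ℝ))
    (x : Fin d → ℝ) : Set (Fin d → ℝ) :=
  {y | x ∈ SProj S G y}

/-- `Q_G(x) = ∪_{n ≥ 1} Q_G^{1/n}(x)`, where
`Q_G^ε(x) = {y ∈ P_G^{-1}(x) : x + ε (x - y) ∈ P_G^{-1}(x)}`. -/
def QG {d : ℕ} (S : Matrix (Fin d) (Fin d) ℝ) (G : Set (Fin d → ℝ))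
    (x : Fin d → ℝ) : Set (Fin d → ℝ) :=
  ⋃ n : ℕ, {y ∈ SProjInv S G x |
    x + ((1 : ℝ) / (n + 1)) • (x - y) ∈ SProjInv S G x}


/-! ### The bilinear form -/

section Form

variable {d : ℕ} {S : Matrix (Fin d) (Fin d) ℝ}

lemma Sb_add_left (x x' y : Fin d → ℝ) : Sb S (x + x') y = Sb S x y + Sb S x' y := by
  simp [Sb, add_dotProduct]

lemma Sb_add_right (x y y' : Fin d → ℝ) : Sb S x (y + y') = Sb S x y + Sb S x y' := by
  simp [Sb, mulVec_add, dotProduct_add]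

lemma Sb_smul_left (t : ℝ) (x y : Fin d → ℝ) : Sb S (t • x) y = t * Sb S x y := by
  simp [Sb]

lemma Sb_smul_right (t : ℝ) (x y : Fin d → ℝ) : Sb S x (t • y) = t * Sb S x y := by
  simp [Sb, mulVec_smul]

lemma Sb_sub_left (x x' y : Fin d → ℝ) : Sb S (x - x') y = Sb S x y - Sb S x' y := by
  simp [Sb, sub_dotProduct]

lemma Sb_sub_right (x y y' : Fin d → ℝ) : Sb S x (y - y') = Sb S x y - Sb S x y' := by
  simp [Sb, mulVec_sub, dotProduct_sub]

lemma Sb_comm (hS : S.IsHermitian) (x y : Fin d → ℝ) : Sb S x y = Sb S y x := by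
  have h : Sᵀ = S := by simpa [Matrix.IsHermitian, conjTranspose_eq_transpose_of_trivial] using hS
  unfold Sb
  rw [dotProduct_mulVec, ← mulVec_transpose, h, dotProduct_comm]

lemma continuous_Sb : Continuous fun p : (Fin d → ℝ) × (Fin d → ℝ) => Sb S p.1 p.2 := by
  unfold Sb
  simp only [dotProduct, mulVec]
  fun_prop

@[fun_prop]
lemma Continuous.Sb {X : Type*} [TopologicalSpace X] {f g : X → Fin d → ℝ}
    (hf : Continuous f) (hg : Continuous g) : Continuous fun x => _root_.Sb S (f x) (g x) :=
  continuous_Sb.comp (hf.prodMk hg)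

lemma Sb_sub_sub (hS : S.IsHermitian) (x y : Fin d → ℝ) :
    Sb S (x - y) (x - y) = Sb S x x - 2 * Sb S x y + Sb S y y := by
  rw [Sb_sub_left, Sb_sub_right, Sb_sub_right, Sb_comm hS y x]; ring

lemma Sb_comb (hS : S.IsHermitian) (a b : ℝ) (x y : Fin d → ℝ) :
    Sb S (a • x + b • y) (a • x + b • y)
      = a ^ 2 * Sb S x x + 2 * a * b * Sb S x y + b ^ 2 * Sb S y y := by
  simp only [Sb_add_left, Sb_add_right, Sb_smul_left, Sb_smul_right, Sb_comm hS y x]; ring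

/-- The splitting of `S` into its positive and negative spectral parts, which annihilate each
other. -/
lemma exists_pos_neg_parts (hS : S.IsHermitian) :
    ∃ P N : Matrix (Fin d) (Fin d) ℝ, P.PosSemidef ∧ N.PosSemidef ∧ S = P - N ∧ N * P = 0 := by
  let U : Matrix (Fin d) (Fin d) ℝ := hS.eigenvectorUnitary
  have hU : star U * U = 1 := Unitary.coe_star_mul_self hS.eigenvectorUnitary
  refine ⟨U * diagonal (fun i => max (hS.eigenvalues i) 0) * star U,
    U * diagonal (fun i => max (-hS.eigenvalues i) 0) * star U, ?_, ?_, ?_, ?_⟩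
  · exact (PosSemidef.diagonal (fun i => le_max_right _ _)).mul_mul_conjTranspose_same U
  · exact (PosSemidef.diagonal (fun i => le_max_right _ _)).mul_mul_conjTranspose_same U
  · rw [← sub_mul, ← mul_sub, diagonal_sub]
    have h := hS.spectral_theorem
    rw [Unitary.conjStarAlgAut_apply] at h
    refine h.trans ?_
    congr 3
    ext i
    simp only [Function.comp, RCLike.ofReal_real_eq_id, id]
    have := max_zero_sub_eq_self (hS.eigenvalues i)
    rw [max_comm] at this
    simpa [max_comm] using this.symm
  · calc _ = U * diagonal (fun i => max (-hS.eigenvalues i) 0) * (star U * U)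
          * diagonal (fun i => max (hS.eigenvalues i) 0) * star U := by
          simp only [Matrix.mul_assoc]
      _ = 0 := by
          rw [hU, Matrix.mul_one, Matrix.mul_assoc U, diagonal_mul_diagonal]
          have : (fun i => max (-hS.eigenvalues i) 0 * max (hS.eigenvalues i) 0) = 0 := by
            ext i
            rcases le_total (hS.eigenvalues i) 0 with h | h <;> simp [h]
          rw [this]
          simp

/-- The form in which all limits with a real parameter tending to `0` are taken below. -/
lemma nonneg_of_forall_mul_le {X D : ℝ} (h : ∀ r : ℝ, 0 < r → r < 1 → r * D ≤ X) : 0 ≤ X := by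
  have h1 : Tendsto (fun r : ℝ => r * D) (nhdsWithin 0 (Ioi 0)) (nhds 0) := by
    have : Tendsto (fun r : ℝ => r * D) (nhds 0) (nhds (0 * D)) :=
      (continuous_id.mul continuous_const).tendsto 0
    rw [zero_mul] at this
    exact this.mono_left nhdsWithin_le_nhds
  refine le_of_tendsto h1 ?_
  filter_upwards [Ioo_mem_nhdsGT (zero_lt_one' ℝ)] with r hr using h r hr.1 hr.2

lemma Sb_nonneg {N : Matrix (Fin d) (Fin d) ℝ} (hN : N.PosSemidef) (v : Fin d → ℝ) :
    0 ≤ Sb N v v := by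
  simpa [Sb] using hN.dotProduct_mulVec_nonneg v

/-- Every convex set lying above the graph of `½S` can be touched from below by the
affine function `y ↦ S(x,y) - ½S(x,x)` at a point `x` differing from a prescribed `x₀` only in
a direction where `S` is negative. The affine function is obtained by separating `A` from the
open convex hypograph of `y ↦ S(x₀,y) - ½S(x₀,x₀) - ½N(y-x₀)`, where `N` is the negative part
of `S`. -/
lemma exists_affine_minorant (hS : S.IsHermitian) (hdet : IsUnit S.det)
    {A : Set ((Fin d → ℝ) × ℝ)} (hA : Convex ℝ A) (hne : A.Nonempty)
    (hle : ∀ p ∈ A, Sb S p.1 p.1 / 2 ≤ p.2) (x₀ : Fin d → ℝ) :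
    ∃ w, (Sb S w w < 0 ∨ w = 0) ∧
      ∀ p ∈ A, Sb S (x₀ + w) p.1 - Sb S (x₀ + w) (x₀ + w) / 2 ≤ p.2 := by
  obtain ⟨P, N, hP, hN, hSPN, hNP⟩ := exists_pos_neg_parts hS
  have hSb : ∀ x y, Sb S x y = Sb P x y - Sb N x y := by
    intro x y; rw [hSPN]; simp [Sb, sub_mulVec, dotProduct_sub]
  let q : (Fin d → ℝ) → ℝ := fun y =>
    Sb S x₀ y - Sb S x₀ x₀ / 2 - Sb N (y - x₀) (y - x₀) / 2
  have hqc : Continuous q := by fun_prop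
  have hq : ∀ y, q y ≤ Sb S y y / 2 := by
    intro y
    have h1 := Sb_sub_sub hS y x₀
    rw [hSb (y - x₀), Sb_comm hS y x₀] at h1
    have h2 := Sb_nonneg hP (y - x₀)
    simp only [q]
    linarith
  let O : Set ((Fin d → ℝ) × ℝ) := {p | p.2 < q p.1}
  have hO : IsOpen O := isOpen_lt continuous_snd (hqc.comp continuous_fst)
  have hOc : Convex ℝ O := by
    rintro ⟨y, c⟩ hy ⟨y', c'⟩ hy' a b ha hb hab
    simp only [O, mem_ofPred_eq, q, Prod.smul_mk, Prod.mk_add_mk, smul_eq_mul] at hy hy' ⊢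
    have e1 : a • y + b • y' - x₀ = a • (y - x₀) + b • (y' - x₀) := by
      have : x₀ = a • x₀ + b • x₀ := by rw [← add_smul, hab, one_smul]
      nth_rewrite 1 [this]
      module
    rw [e1, Sb_comb hN.1, Sb_add_right, Sb_smul_right, Sb_smul_right]
    have h3 := Sb_nonneg hN ((y - x₀) - (y' - x₀))
    rw [Sb_sub_sub hN.1] at h3
    have hb' : b = 1 - a := by linarith
    have h5 : a * c + b * c' < a * (Sb S x₀ y - Sb S x₀ x₀ / 2 - Sb N (y - x₀) (y - x₀) / 2)
        + b * (Sb S x₀ y' - Sb S x₀ x₀ / 2 - Sb N (y' - x₀) (y' - x₀) / 2) := by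
      rcases ha.eq_or_lt with h | h
      · have : b = 1 := by linarith
        rw [← h, this]; linarith
      · have := mul_lt_mul_of_pos_left hy h
        have := mul_le_mul_of_nonneg_left hy'.le hb
        linarith
    have h4 := mul_nonneg (mul_nonneg ha hb) h3
    subst hb'
    nlinarith
  have hdisj : Disjoint O A := by
    rw [Set.disjoint_left]
    intro p hp hpA
    have := hle p hpA
    have := hq p.1
    simp only [O, mem_ofPred_eq] at hp
    linarith
  obtain ⟨f, u, hfO, hfA⟩ := geometric_hahn_banach_open hOc hO hA hdisj
  have hf : ∀ y c, f (y, c) = f (y, 0) + c * f (0, 1) := by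
    intro y c
    have : ((y, c) : (Fin d → ℝ) × ℝ) = (y, 0) + c • (0, 1) := by simp
    rw [this, map_add, map_smul, smul_eq_mul]
  set σ := f (0, 1) with hσ
  obtain ⟨⟨yb, cb⟩, hb⟩ := hne
  have hσpos : 0 < σ := by
    have h1 := hfA _ hb
    have h2 := hfO (yb, q yb - 1) (by simp [O])
    rw [hf] at h1 h2
    have h3 := (hq yb).trans (hle _ hb)
    simp only at h3
    by_contra hcon
    nlinarith
  have hfO' : ∀ y, f (y, 0) + q y * σ ≤ u := by
    intro y
    have : 0 ≤ u - f (y, 0) - q y * σ := by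
      refine nonneg_of_forall_mul_le (D := -σ) fun r hr _ => ?_
      have := hfO (y, q y - r) (by simp [O, hr])
      rw [hf] at this
      linarith
    linarith
  let g : Fin d → ℝ := fun i => -(f (Pi.single i 1, 0)) / σ
  have hg : ∀ y, f (y, 0) = -σ * (g ⬝ᵥ y) := by
    intro y
    have h1 : f (y, 0) = ∑ i, y i * f (Pi.single i 1, 0) := by
      have := LinearMap.pi_apply_eq_sum_univ
        (f.toLinearMap.comp (LinearMap.inl ℝ (Fin d → ℝ) ℝ)) y
      simp only [LinearMap.comp_apply, LinearMap.inl_apply, ContinuousLinearMap.coe_coe,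
        smul_eq_mul] at this
      rw [this]
      refine Finset.sum_congr rfl fun i _ => ?_
      congr 3
      ext j
      simp [Pi.single_apply, eq_comm]
    rw [h1, dotProduct, Finset.mul_sum]
    refine Finset.sum_congr rfl fun i _ => ?_
    simp only [g]
    field_simp
  let w : Fin d → ℝ := S⁻¹ *ᵥ (g - S *ᵥ x₀)
  have hw : ∀ y, g ⬝ᵥ y = Sb S x₀ y + Sb S w y := by
    intro y
    rw [Sb_comm hS x₀, Sb_comm hS w]
    simp only [Sb, w, mulVec_mulVec, mul_nonsing_inv S hdet, one_mulVec]
    rw [← dotProduct_add, add_sub_cancel, dotProduct_comm]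
  set κ := u / σ + Sb S w x₀ + Sb S x₀ x₀ / 2 with hκ
  have hu : u = (κ - Sb S w x₀ - Sb S x₀ x₀ / 2) * σ := by
    rw [hκ]; field_simp; ring
  have hlow : ∀ v, 0 ≤ κ + Sb S w v + Sb N v v / 2 := by
    intro v
    have h := hfO' (x₀ + v)
    rw [hg, hw, hu] at h
    have e : q (x₀ + v) = Sb S x₀ x₀ / 2 + Sb S x₀ v - Sb N v v / 2 := by
      simp only [q, Sb_add_right, add_sub_cancel_left]; ring
    rw [e, Sb_add_right, Sb_add_right] at h
    have h' : 0 ≤ σ * (κ + Sb S w v + Sb N v v / 2) := by nlinarith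
    exact nonneg_of_mul_nonneg_right h' hσpos
  -- otherwise `hlow` fails at large negative multiples of `P w`, on which `N` vanishes
  have hPw : P *ᵥ w = 0 := by
    have e1 : Sb S w (P *ᵥ w) = (P *ᵥ w) ⬝ᵥ (P *ᵥ w) := by
      rw [Sb_comm hS]
      unfold Sb
      rw [hSPN, sub_mulVec, dotProduct_sub, dotProduct_comm _ (N *ᵥ w)]
      have : (N *ᵥ w) ⬝ᵥ (P *ᵥ w) = 0 := by
        have h := Sb_comm hN.1 (P *ᵥ w) w
        simp only [Sb, mulVec_mulVec, hNP, zero_mulVec, dotProduct_zero] at h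
        rw [dotProduct_comm]; exact h
      rw [this, sub_zero]
    have e2 : Sb N (P *ᵥ w) (P *ᵥ w) = 0 := by
      simp [Sb, hNP]
    by_contra hcon
    have hpos : 0 < (P *ᵥ w) ⬝ᵥ (P *ᵥ w) := by
      refine lt_of_le_of_ne (Finset.sum_nonneg fun i _ => mul_self_nonneg _) fun h => hcon ?_
      exact dotProduct_self_eq_zero.1 h.symm
    have h := hlow ((-((κ + 1) / ((P *ᵥ w) ⬝ᵥ (P *ᵥ w)))) • (P *ᵥ w))
    simp only [Sb_smul_right, Sb_smul_left, e1, e2] at h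
    have : (κ + 1) / ((P *ᵥ w) ⬝ᵥ (P *ᵥ w)) * ((P *ᵥ w) ⬝ᵥ (P *ᵥ w)) = κ + 1 := by
      field_simp
    linarith
  have hSw : Sb S w w = -Sb N w w := by
    rw [hSb]; simp [Sb, hPw]
  refine ⟨w, ?_, ?_⟩
  · rcases (Sb_nonneg hN w).eq_or_lt with h | h
    · right
      have hNw : N *ᵥ w = 0 := by
        refine (hN.dotProduct_mulVec_zero_iff w).1 ?_
        simpa [Sb] using h.symm
      have : S *ᵥ w = 0 := by rw [hSPN, sub_mulVec, hPw, hNw, sub_zero]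
      calc w = S⁻¹ *ᵥ (S *ᵥ w) := by rw [mulVec_mulVec, nonsing_inv_mul S hdet, one_mulVec]
        _ = 0 := by rw [this, mulVec_zero]
    · left; linarith
  · rintro ⟨y, c⟩ hp
    have h := hfA _ hp
    rw [hf, hg, hw, hu] at h
    have h1 := hlow w
    have h2 : 0 ≤ σ * (c - (Sb S x₀ y + Sb S w y + (κ - Sb S w x₀ - Sb S x₀ x₀ / 2))) := by
      nlinarith
    have h3 := nonneg_of_mul_nonneg_right h2 hσpos
    simp only [Sb_add_left, Sb_add_right, Sb_comm hS x₀ w]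
    linarith

/-- Every convex set above the graph of `½S` is above the graph of the Fitzpatrick function of
some maximal `S`-monotone set: enlarge the set to a maximal one by Zorn's lemma and take the
points where it touches the graph of `½S`. -/
lemma exists_maxSMono_below (hS : S.IsHermitian) (hdet : IsUnit S.det)
    {A : Set ((Fin d → ℝ) × ℝ)} (hA : Convex ℝ A) (hne : A.Nonempty)
    (hle : ∀ p ∈ A, Sb S p.1 p.1 / 2 ≤ p.2) :
    ∃ H, MaxSMono S H ∧ ∀ p ∈ A, ∀ x ∈ H, Sb S x p.1 - Sb S x x / 2 ≤ p.2 := by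
  obtain ⟨B, hAB, hB⟩ := zorn_subset_nonempty
    {B : Set ((Fin d → ℝ) × ℝ) | Convex ℝ B ∧ ∀ p ∈ B, Sb S p.1 p.1 / 2 ≤ p.2}
    (fun c hc hchain hcne => ⟨⋃₀ c, ⟨hchain.directedOn.convex_sUnion fun s hs => (hc hs).1, by
      rintro p ⟨s, hs, hps⟩; exact (hc hs).2 p hps⟩, fun s hs => subset_sUnion_of_mem hs⟩)
    A ⟨hA, hle⟩
  obtain ⟨⟨hBc, hBle⟩, hBmax⟩ := hB
  have hBne : B.Nonempty := hne.mono hAB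
  have hlow : ∀ x, (x, Sb S x x / 2) ∈ B → ∀ p ∈ B, Sb S x p.1 - Sb S x x / 2 ≤ p.2 := by
    rintro x hx ⟨y, c⟩ hp
    suffices 0 ≤ c - (Sb S x y - Sb S x x / 2) by simp only; linarith
    refine nonneg_of_forall_mul_le (D := Sb S (x - y) (x - y) / 2) fun r hr hr1 => ?_
    have h := hBle _ (hBc hx hp (by linarith : 0 ≤ 1 - r) hr.le (by ring))
    simp only [Prod.smul_mk, Prod.mk_add_mk, smul_eq_mul, Sb_comb hS] at h
    rw [Sb_sub_sub hS]
    have h' : 0 ≤ r * (c - (Sb S x y - Sb S x x / 2)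
      - r * ((Sb S x x - 2 * Sb S x y + Sb S y y) / 2)) := by nlinarith
    have := nonneg_of_mul_nonneg_right h' hr
    linarith
  have hmem : ∀ x, (∀ p ∈ B, Sb S x p.1 - Sb S x x / 2 ≤ p.2) → (x, Sb S x x / 2) ∈ B := by
    intro x hx
    have hsub : insert (x, Sb S x x / 2) B ⊆ convexHull ℝ (insert (x, Sb S x x / 2) B) :=
      subset_convexHull ℝ _
    refine hBmax (y := convexHull ℝ (insert (x, Sb S x x / 2) B)) ⟨convex_convexHull _ _, ?_⟩
      ((subset_insert _ _).trans hsub) (hsub (mem_insert _ _))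
    intro p hp
    rw [convexHull_insert hBne, hBc.convexHull_eq, mem_convexJoin] at hp
    obtain ⟨_, rfl, ⟨y, c⟩, hy, a, b, ha, hb, hab, rfl⟩ := hp
    simp only [Prod.smul_mk, Prod.mk_add_mk, smul_eq_mul, Sb_comb hS]
    have h1 := hx _ hy
    have h2 := hBle _ hy
    simp only at h1 h2
    have ha' : a = 1 - b := by linarith
    have h3 := mul_le_mul_of_nonneg_left h1 (mul_nonneg ha hb)
    have h4 := mul_le_mul_of_nonneg_left h2 (mul_nonneg hb hb)
    subst ha'
    nlinarith
  refine ⟨{x | (x, Sb S x x / 2) ∈ B}, ⟨?_, ?_⟩, fun p hp x hx => hlow x hx p (hAB hp)⟩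
  · intro x hx y hy
    have := hlow x hx _ hy
    rw [Sb_sub_sub hS]
    simp only at this
    linarith
  · intro T hT hHT
    refine subset_antisymm (fun x₀ hx₀ => ?_) hHT
    obtain ⟨w, hw, hwB⟩ := exists_affine_minorant hS hdet hBc hBne hBle x₀
    have hxw := hmem _ hwB
    have h := hT _ (hHT hxw) _ hx₀
    rw [add_sub_cancel_left] at h
    rcases hw with hw | hw
    · linarith
    · rw [hw, add_zero] at hxw; exact hxw

end Form

/-! ### Epigraphs of Fitzpatrick functions -/

section Epigraph

variable {d : ℕ} {S : Matrix (Fin d) (Fin d) ℝ} {G G' C : Set (Fin d → ℝ)}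

/-- The epigraph of the Fitzpatrick function `ψ_G`, as a subset of `ℝ^d × ℝ`. -/
def epiF (S : Matrix (Fin d) (Fin d) ℝ) (G : Set (Fin d → ℝ)) : Set ((Fin d → ℝ) × ℝ) :=
  {p | ∀ x ∈ G, Sb S x p.1 - Sb S x x / 2 ≤ p.2}

lemma fitz_le_coe_iff {y : Fin d → ℝ} {c : ℝ} : fitz S G y ≤ (c : EReal) ↔ (y, c) ∈ epiF S G := by
  simp only [fitz, iSup_le_iff, EReal.coe_le_coe_iff]
  rfl

lemma convex_epiF : Convex ℝ (epiF S G) := by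
  rintro ⟨y, c⟩ hy ⟨y', c'⟩ hy' a b ha hb hab x hx
  have h1 := mul_le_mul_of_nonneg_left (hy x hx) ha
  have h2 := mul_le_mul_of_nonneg_left (hy' x hx) hb
  simp only [Prod.smul_mk, Prod.mk_add_mk, smul_eq_mul, Sb_add_right, Sb_smul_right] at h1 h2 ⊢
  have hb' : b = 1 - a := by linarith
  subst hb'
  nlinarith

/-- By maximality, `ψ_G ≥ ½S`, and equality forces membership in `G`. -/
lemma MaxSMono.mem_of_epiF (hS : S.IsHermitian) (hG : MaxSMono S G) {y : Fin d → ℝ}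
    (h : (y, Sb S y y / 2) ∈ epiF S G) : y ∈ G := by
  have hy : ∀ x ∈ G, 0 ≤ Sb S (x - y) (x - y) := by
    intro x hx
    have := h x hx
    rw [Sb_sub_sub hS]
    simp only at this
    linarith
  have hmono : SMono S (insert y G) := by
    rintro a (rfl | ha) b (rfl | hb)
    · simp [Sb]
    · have := hy b hb
      rw [Sb_sub_sub hS] at this ⊢
      rw [Sb_comm hS a b]; linarith
    · exact hy a ha
    · exact hG.1 a ha b hb
  rw [← hG.2 _ hmono (subset_insert _ _)]
  exact mem_insert _ _

lemma MaxSMono.le_of_epiF (hS : S.IsHermitian) (hG : MaxSMono S G) {y : Fin d → ℝ} {c : ℝ}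
    (h : (y, c) ∈ epiF S G) : Sb S y y / 2 ≤ c := by
  by_contra! hc
  have hy : y ∈ G := hG.mem_of_epiF hS fun x hx => (h x hx).trans hc.le
  have := h y hy
  simp only at this
  linarith

lemma MaxSMono.half_le_fitz (hS : S.IsHermitian) (hG : MaxSMono S G) (y : Fin d → ℝ) :
    ((Sb S y y / 2 : ℝ) : EReal) ≤ fitz S G y := by
  refine EReal.le_of_forall_lt_iff_le.1 fun c hc => ?_
  exact EReal.coe_le_coe_iff.2 (hG.le_of_epiF hS (fitz_le_coe_iff.1 hc.le))

lemma MaxSMono.mem_iff_fitz (hS : S.IsHermitian) (hG : MaxSMono S G) {y : Fin d → ℝ} :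
    y ∈ G ↔ fitz S G y ≤ ((Sb S y y / 2 : ℝ) : EReal) := by
  rw [fitz_le_coe_iff]
  refine ⟨fun hy x hx => ?_, hG.mem_of_epiF hS⟩
  have := hG.1 x hx y hy
  rw [Sb_sub_sub hS] at this
  simp only
  linarith

/-- A quantitative form of the fact that the affine function `S(x,·) - ½S(x,x)` lies below
`ψ_G` when `x ∈ G`: for arbitrary `x` this holds up to a small error once the defect
`ψ_G(x) - ½S(x,x)` is penalized with a large weight `m`. It follows from `ψ_G ≥ ½S` at the
convex combination of `x` and `y` with weights `1 - 1/m` and `1/m`. -/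
lemma MaxSMono.penalty_le (hS : S.IsHermitian) (hG : MaxSMono S G) {x y : Fin d → ℝ} {c b m : ℝ}
    (hm : 1 < m) (hx : (x, c) ∈ epiF S G) (hy : (y, b) ∈ epiF S G) :
    Sb S x y - Sb S x x / 2 - m * (c - Sb S x x / 2) ≤ b + (b - Sb S y y / 2) / (m - 1) := by
  have hm0 : 0 < m := by linarith
  have hm1 : 0 < m - 1 := by linarith
  have h := hG.le_of_epiF hS (convex_epiF hx hy (a := (m - 1) / m) (b := 1 / m) (by positivity)
    (by positivity) (by field_simp; ring))
  simp only [Prod.smul_mk, smul_eq_mul, Sb_comb hS] at h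
  rw [← sub_nonneg] at h ⊢
  have e : b + (b - Sb S y y / 2) / (m - 1)
      - (Sb S x y - Sb S x x / 2 - m * (c - Sb S x x / 2))
      = m ^ 2 / (m - 1) * ((m - 1) / m * c + 1 / m * b - (((m - 1) / m) ^ 2 * Sb S x x
        + 2 * ((m - 1) / m) * (1 / m) * Sb S x y + (1 / m) ^ 2 * Sb S y y) / 2) := by
    field_simp
    ring
  rw [e]
  positivity

/-- Index set of the affine functions `y ↦ S(x,y) - ½S(x,x) - m(e(x) + e'(x))`, `x ∈ C`, where
`e` and `e'` are the defects `ψ_G - ½S` and `ψ_{G'} - ½S`: the pair `(x, r)` stands for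
`y ↦ S(x,y) - r`. -/
def penSet (S : Matrix (Fin d) (Fin d) ℝ) (G G' C : Set (Fin d → ℝ)) (m : ℝ) :
    Set ((Fin d → ℝ) × ℝ) :=
  {q | q.1 ∈ C ∧ ∃ c c', (q.1, c) ∈ epiF S G ∧ (q.1, c') ∈ epiF S G' ∧
    q.2 = Sb S q.1 q.1 / 2 + m * (c + c' - Sb S q.1 q.1)}

/-- The supremum of the penalized affine functions indexed by `penSet`. -/
def penFun (S : Matrix (Fin d) (Fin d) ℝ) (G G' C : Set (Fin d → ℝ)) (m : ℝ)
    (y : Fin d → ℝ) : EReal :=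
  ⨆ q ∈ penSet S G G' C m, ((Sb S q.1 y - q.2 : ℝ) : EReal)

lemma measurable_fitz : Measurable (fitz S G) := by
  refine LowerSemicontinuous.measurable (lowerSemicontinuous_biSup fun x _ => ?_)
  exact (continuous_coe_real_ereal.comp (by fun_prop)).lowerSemicontinuous

lemma measurable_penFun {m : ℝ} : Measurable (penFun S G G' C m) := by
  refine LowerSemicontinuous.measurable (lowerSemicontinuous_biSup fun x _ => ?_)
  exact (continuous_coe_real_ereal.comp (by fun_prop)).lowerSemicontinuous

lemma penSet_le (hS : S.IsHermitian) (hG : MaxSMono S G) (hG' : MaxSMono S G') {m : ℝ}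
    (hm : 1 < m) {q : (Fin d → ℝ) × ℝ} (hq : q ∈ penSet S G G' C m) {y : Fin d → ℝ} {b : ℝ}
    (hb : (y, b) ∈ epiF S G ∨ (y, b) ∈ epiF S G') :
    Sb S q.1 y - q.2 ≤ b + (b - Sb S y y / 2) / (m - 1) := by
  obtain ⟨-, c, c', hc, hc', hq2⟩ := hq
  have h1 := hG.le_of_epiF hS hc
  have h2 := hG'.le_of_epiF hS hc'
  rcases hb with hb | hb
  · have h3 := hG.penalty_le hS hm hc hb
    have h4 : 0 ≤ m * (c' - Sb S q.1 q.1 / 2) := mul_nonneg (by linarith) (by linarith)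
    rw [hq2]; linarith
  · have h3 := hG'.penalty_le hS hm hc' hb
    have h4 : 0 ≤ m * (c - Sb S q.1 q.1 / 2) := mul_nonneg (by linarith) (by linarith)
    rw [hq2]; linarith

/-- If `α` is convex and dominates the penalized affine functions with weight `j`, then
`(α + j(ψ_G + ψ_{G'})) / (2j+1)` is convex and at least `½S` on `C`, hence it dominates some
Fitzpatrick function. -/
lemma exists_maxSMono_avg (hS : S.IsHermitian) (hdet : IsUnit S.det) (hC : Convex ℝ C) {j : ℝ}
    (hj : 0 ≤ j)
    (hne : ∃ y ∈ C, ∃ α b b', (y, b) ∈ epiF S G ∧ (y, b') ∈ epiF S G' ∧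
      ∀ q ∈ penSet S G G' C j, Sb S q.1 y - q.2 ≤ α) :
    ∃ H, MaxSMono S H ∧ ∀ y ∈ C, ∀ α b b', (y, b) ∈ epiF S G → (y, b') ∈ epiF S G' →
      (∀ q ∈ penSet S G G' C j, Sb S q.1 y - q.2 ≤ α) →
      fitz S H y ≤ (((α + j * (b + b')) / (2 * j + 1) : ℝ) : EReal) := by
  have hj1 : 0 < 2 * j + 1 := by linarith
  let A : Set ((Fin d → ℝ) × ℝ) := {p | p.1 ∈ C ∧ ∃ α b b', (p.1, b) ∈ epiF S G ∧
    (p.1, b') ∈ epiF S G' ∧ (∀ q ∈ penSet S G G' C j, Sb S q.1 p.1 - q.2 ≤ α) ∧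
    α + j * (b + b') = (2 * j + 1) * p.2}
  have hA : Convex ℝ A := by
    rintro ⟨y, c⟩ ⟨hy, α, b, b', hb, hb', hα, hc⟩ ⟨z, e⟩ ⟨hz, β, f, f', hf, hf', hβ, he⟩ s t hs ht hst
    refine ⟨hC hy hz hs ht hst, s * α + t * β, s * b + t * f, s * b' + t * f',
      convex_epiF hb hf hs ht hst, convex_epiF hb' hf' hs ht hst, fun q hq => ?_, ?_⟩
    · have h1 := mul_le_mul_of_nonneg_left (hα q hq) hs
      have h2 := mul_le_mul_of_nonneg_left (hβ q hq) ht
      simp only [Prod.smul_mk, Prod.mk_add_mk, Sb_add_right, Sb_smul_right] at h1 h2 ⊢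
      have : t = 1 - s := by linarith
      subst this
      nlinarith
    · simp only [Prod.smul_mk, Prod.mk_add_mk, smul_eq_mul] at hc he ⊢
      linear_combination s * hc + t * he
  have hmem : ∀ y ∈ C, ∀ α b b', (y, b) ∈ epiF S G → (y, b') ∈ epiF S G' →
      (∀ q ∈ penSet S G G' C j, Sb S q.1 y - q.2 ≤ α) →
      (y, (α + j * (b + b')) / (2 * j + 1)) ∈ A := by
    intro y hy α b b' hb hb' hα
    refine ⟨hy, α, b, b', hb, hb', hα, ?_⟩
    field_simp
  obtain ⟨H, hH, hHA⟩ := exists_maxSMono_below hS hdet hA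
    (by obtain ⟨y, hy, α, b, b', h1, h2, h3⟩ := hne; exact ⟨_, hmem y hy α b b' h1 h2 h3⟩) (by
      rintro ⟨y, c⟩ ⟨hy, α, b, b', hb, hb', hα, hc⟩
      have h := hα (y, Sb S y y / 2 + j * (b + b' - Sb S y y)) ⟨hy, b, b', hb, hb', rfl⟩
      simp only at h hc ⊢
      have : 0 ≤ (2 * j + 1) * (c - Sb S y y / 2) := by nlinarith
      have := nonneg_of_mul_nonneg_right this hj1
      linarith)
  exact ⟨H, hH, fun y hy α b b' h1 h2 h3 => fitz_le_coe_iff.2 (hHA _ (hmem y hy α b b' h1 h2 h3))⟩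

end Epigraph

/-! ### Integrals of extended real functions -/

section Integral

/-- The hypothesis `x ≠ ⊥` only serves to make `EReal.toReal` monotone. -/
lemma epos_mono {x y : EReal} (h : x ≤ y) (hx : x ≠ ⊥) : epos x ≤ epos y := by
  unfold epos
  by_cases hy : y = ⊤
  · simp [hy]
  · have hx' : x ≠ ⊤ := fun e => hy (top_le_iff.1 (e ▸ h))
    rw [if_neg hy, if_neg hx']
    exact ENNReal.ofReal_le_ofReal (EReal.toReal_le_toReal h hx hy)

lemma epos_coe (x : ℝ) : epos (x : EReal) = ENNReal.ofReal x := by simp [epos]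

lemma measurable_epos : Measurable epos :=
  Measurable.ite (measurableSet_singleton _) measurable_const
    (ENNReal.measurable_ofReal.comp measurable_ereal_toReal)

variable {α : Type*} [MeasurableSpace α] {μ : Measure α}

lemma eInt_coe {b : α → ℝ} (hb : Integrable b μ) :
    eInt μ (fun a => (b a : EReal)) = ((∫ a, b a ∂μ : ℝ) : EReal) := by
  have h1 : ∫⁻ a, ENNReal.ofReal (b a) ∂μ ≠ ⊤ := hb.lintegral_lt_top.ne
  have h2 : ∫⁻ a, ENNReal.ofReal (-b a) ∂μ ≠ ⊤ := hb.neg.lintegral_lt_top.ne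
  unfold eInt
  simp only [← EReal.coe_neg, epos_coe]
  rw [integral_eq_lintegral_pos_part_sub_lintegral_neg_part hb, EReal.coe_sub,
    EReal.coe_ennreal_toReal h1, EReal.coe_ennreal_toReal h2]

lemma eInt_congr {f g : α → EReal} (h : f =ᵐ[μ] g) : eInt μ f = eInt μ g := by
  unfold eInt
  rw [lintegral_congr_ae (h.mono fun a ha => congrArg epos ha),
    lintegral_congr_ae (h.mono fun a ha => congrArg (fun x => epos (-x)) ha)]

/-- A measurable function with values in `ℝ ∪ {+∞}`, bounded below by an integrable function and
with integral less than `+∞`, is a.e. finite and integrable, and `eInt` is its usual integral. -/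
lemma eInt_finite {f : α → EReal} (hf : Measurable f) {s : α → ℝ} (hs : Integrable s μ)
    (hsf : ∀ᵐ a ∂μ, (s a : EReal) ≤ f a) (hlt : eInt μ f ≠ ⊤) :
    (∀ᵐ a ∂μ, f a ≠ ⊤ ∧ f a = ((f a).toReal : EReal)) ∧ Integrable (fun a => (f a).toReal) μ ∧
      eInt μ f = ((∫ a, (f a).toReal ∂μ : ℝ) : EReal) := by
  have hneg : ∫⁻ a, epos (-(f a)) ∂μ ≠ ⊤ := by
    refine ne_top_of_le_ne_top hs.neg.lintegral_lt_top.ne (lintegral_mono_ae ?_)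
    filter_upwards [hsf] with a ha
    simp only [Pi.neg_apply]
    by_cases ht : f a = ⊤
    · simp [ht, epos]
    · rw [← epos_coe, EReal.coe_neg]
      exact epos_mono (EReal.neg_le_neg_iff.2 ha) (by simpa using ht)
  have hpos : ∫⁻ a, epos (f a) ∂μ ≠ ⊤ := by
    intro h
    apply hlt
    unfold eInt
    rw [h, ← ENNReal.ofReal_toReal hneg]
    simp
  have hfin : ∀ᵐ a ∂μ, f a ≠ ⊤ ∧ f a = ((f a).toReal : EReal) := by
    filter_upwards [ae_lt_top (measurable_epos.comp hf) hpos, hsf] with a ha hsa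
    have h1 : f a ≠ ⊤ := fun h => by simp [h, epos] at ha
    refine ⟨h1, (EReal.coe_toReal h1 ?_).symm⟩
    intro h
    rw [h] at hsa
    exact absurd hsa (by simp)
  have hgi : Integrable (fun a => (f a).toReal) μ := by
    refine ⟨(measurable_ereal_toReal.comp hf).aestronglyMeasurable, ?_⟩
    rw [HasFiniteIntegral]
    refine lt_of_le_of_lt (lintegral_mono_ae (g := fun a => epos (f a) + epos (-(f a))) ?_) ?_
    · filter_upwards [hfin] with a ha
      rw [ha.2, ← EReal.coe_neg, epos_coe, epos_coe, EReal.toReal_coe, ← ofReal_norm,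
        Real.norm_eq_abs]
      rcases le_total 0 (f a).toReal with h | h
      · rw [abs_of_nonneg h]; exact le_self_add
      · rw [abs_of_nonpos h]; exact le_add_self
    · rw [lintegral_add_left (f := fun a => epos (f a)) (measurable_epos.comp hf)]
      exact ENNReal.add_lt_top.2 ⟨hpos.lt_top, hneg.lt_top⟩
  exact ⟨hfin, hgi, (eInt_congr (hfin.mono fun a ha => ha.2)).trans (eInt_coe hgi)⟩

lemma eInt_le_coe {f : α → EReal} {s b : α → ℝ} (hb : Integrable b μ)
    (hsf : ∀ᵐ a ∂μ, (s a : EReal) ≤ f a) (hfb : ∀ᵐ a ∂μ, f a ≤ (b a : EReal)) :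
    eInt μ f ≤ ((∫ a, b a ∂μ : ℝ) : EReal) := by
  rw [← eInt_coe hb]
  unfold eInt
  refine EReal.sub_le_sub ?_ ?_
  · refine EReal.coe_ennreal_le_coe_ennreal_iff.2 (lintegral_mono_ae ?_)
    filter_upwards [hsf, hfb] with a h1 h2
    exact epos_mono h2 (fun h => by rw [h] at h1; exact absurd h1 (by simp))
  · refine EReal.coe_ennreal_le_coe_ennreal_iff.2 (lintegral_mono_ae ?_)
    filter_upwards [hfb] with a h2
    exact epos_mono (EReal.neg_le_neg_iff.2 h2) (by rw [← EReal.coe_neg]; exact EReal.coe_ne_bot _)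

lemma integrable_Sb {d : ℕ} {ν : Measure (Fin d → ℝ)}
    (hν : Integrable (fun y => ‖y‖ ^ 2) ν) (M : Matrix (Fin d) (Fin d) ℝ) :
    Integrable (fun y => Sb M y y / 2) ν := by
  refine Integrable.div_const ?_ 2
  simp only [Sb, dotProduct, mulVec, Finset.mul_sum]
  refine integrable_finsetSum _ fun i _ => integrable_finsetSum _ fun j _ => ?_
  refine (hν.const_mul |M i j|).mono' (by fun_prop) (ae_of_all _ fun y => ?_)
  rw [Real.norm_eq_abs, abs_mul, abs_mul]
  have h1 : |y i| ≤ ‖y‖ := norm_le_pi_norm y i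
  have h2 : |y j| ≤ ‖y‖ := norm_le_pi_norm y j
  have h3 := mul_le_mul h1 h2 (abs_nonneg _) (norm_nonneg _)
  calc |y i| * (|M i j| * |y j|) = |M i j| * (|y i| * |y j|) := by ring
    _ ≤ |M i j| * ‖y‖ ^ 2 := by rw [pow_two]; gcongr

end Integral

/-! ### Almost everywhere uniqueness -/

section Uniqueness

variable {d : ℕ} {S : Matrix (Fin d) (Fin d) ℝ} {G G' C : Set (Fin d → ℝ)}
  {ν : Measure (Fin d → ℝ)}

/-- The dual value is less than `+∞`: a Fitzpatrick function lies below the positive part of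
`½S`, which is convex and integrable. -/
lemma DualOpt.eInt_ne_top (hS : S.IsHermitian) (hdet : IsUnit S.det)
    (hν : Integrable (fun y => ‖y‖ ^ 2) ν) (hG : DualOpt S ν G) : eInt ν (fitz S G) ≠ ⊤ := by
  obtain ⟨P, N, hP, hN, hSPN, -⟩ := exists_pos_neg_parts hS
  obtain ⟨H, hH, hHA⟩ := exists_maxSMono_below hS hdet
    (A := {p : (Fin d → ℝ) × ℝ | Sb P p.1 p.1 / 2 ≤ p.2}) (by
      rintro ⟨y, c⟩ hy ⟨z, e⟩ hz a b ha hb hab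
      simp only [mem_ofPred_eq, Prod.smul_mk, Prod.mk_add_mk, smul_eq_mul, Sb_comb hP.1]
        at hy hz ⊢
      have h1 := mul_le_mul_of_nonneg_left hy ha
      have h2 := mul_le_mul_of_nonneg_left hz hb
      have h3 := mul_nonneg (mul_nonneg ha hb) (Sb_nonneg hP (y - z))
      rw [Sb_sub_sub hP.1] at h3
      have hb' : b = 1 - a := by linarith
      subst hb'
      nlinarith)
    ⟨(0, 0), by simp [Sb]⟩ (by
      rintro ⟨y, c⟩ hy
      have h1 := Sb_nonneg hN y
      have h2 : Sb S y y = Sb P y y - Sb N y y := by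
        rw [hSPN]; simp [Sb, sub_mulVec, dotProduct_sub]
      simp only [mem_ofPred_eq] at hy
      simp only
      linarith)
  refine ne_top_of_le_ne_top ?_ ((hG.2 H hH).trans (eInt_le_coe (integrable_Sb hν P)
    (ae_of_all _ fun y => hH.half_le_fitz hS y)
    (ae_of_all _ fun y => fitz_le_coe_iff.2 (hHA (y, Sb P y y / 2) (le_refl (Sb P y y / 2))))))
  exact EReal.coe_ne_top _

/-- Two optimal sets have a.e. equal Fitzpatrick functions, which are moreover a.e. dominated by
the suprema `penFun` of affine functions indexed by points of any convex set of full measure.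

The supremum `α` of the penalized affine functions with weight `j` satisfies
`∫ α ≥ V`, where `V` is the dual value, because `(∫ α + 2jV)/(2j+1)` dominates the integral of a
Fitzpatrick function. On the other hand, it is bounded by the minimum of `ψ_G`, `ψ_{G'}` and
`penFun` up to an error of order `1/j`. Hence the integral of this minimum is at least `V`, the
integral of `ψ_G` and of `ψ_{G'}`. -/
lemma DualOpt.ae_eq_and_le (hS : S.IsHermitian) (hdet : IsUnit S.det) [IsProbabilityMeasure ν]
    (hν : Integrable (fun y => ‖y‖ ^ 2) ν) (hG : DualOpt S ν G) (hG' : DualOpt S ν G')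
    (hC : Convex ℝ C) (hCν : ∀ᵐ y ∂ν, y ∈ C) {m : ℝ} (hm : 1 < m) :
    ∀ᵐ y ∂ν, fitz S G y ≠ ⊤ ∧ fitz S G y = fitz S G' y ∧ fitz S G y ≤ penFun S G G' C m y := by
  have hs := integrable_Sb hν S
  set s : (Fin d → ℝ) → ℝ := fun y => Sb S y y / 2 with hsdef
  obtain ⟨hfin, hgi, hV⟩ := eInt_finite measurable_fitz hs
    (ae_of_all _ fun y => hG.1.half_le_fitz hS y) (hG.eInt_ne_top hS hdet hν)
  obtain ⟨hfin', hgi', hV'⟩ := eInt_finite measurable_fitz hs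
    (ae_of_all _ fun y => hG'.1.half_le_fitz hS y) (hG'.eInt_ne_top hS hdet hν)
  set g : (Fin d → ℝ) → ℝ := fun y => (fitz S G y).toReal with hg
  set g' : (Fin d → ℝ) → ℝ := fun y => (fitz S G' y).toReal with hg'
  set V : ℝ := ∫ y, g y ∂ν with hVdef
  have hVV : ∫ y, g' y ∂ν = V := by
    have := (hG.2 G' hG'.1).antisymm (hG'.2 G hG.1)
    rw [hV, hV'] at this
    exact (EReal.coe_eq_coe_iff.1 this).symm
  set k : (Fin d → ℝ) → ℝ := fun y => (penFun S G G' C m y).toReal with hk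
  -- the finite values of all functions involved, at almost every point
  have hmain : ∀ᵐ y ∂ν, y ∈ C ∧ (y, g y) ∈ epiF S G ∧ (y, g' y) ∈ epiF S G' ∧
      penFun S G G' C m y = (k y : EReal) ∧
      s y - m * (g y + g' y - 2 * s y) ≤ k y := by
    filter_upwards [hCν, hfin, hfin'] with y hy h1 h2
    have e1 : (y, g y) ∈ epiF S G := fitz_le_coe_iff.1 h1.2.le
    have e2 : (y, g' y) ∈ epiF S G' := fitz_le_coe_iff.1 h2.2.le
    have hlow : ((s y - m * (g y + g' y - 2 * s y) : ℝ) : EReal) ≤ penFun S G G' C m y := by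
      refine le_trans (EReal.coe_le_coe_iff.2 (le_of_eq ?_))
        (le_iSup₂_of_le (y, Sb S y y / 2 + m * (g y + g' y - Sb S y y))
          ⟨hy, g y, g' y, e1, e2, rfl⟩ le_rfl)
      simp only [hsdef]
      ring
    have hup : penFun S G G' C m y ≤ ((g y + (g y - Sb S y y / 2) / (m - 1) : ℝ) : EReal) :=
      iSup₂_le fun q hq => EReal.coe_le_coe_iff.2 (penSet_le hS hG.1 hG'.1 hm hq (.inl e1))
    have hkk : penFun S G G' C m y = (k y : EReal) := by
      refine (EReal.coe_toReal (fun h => ?_) (fun h => ?_)).symm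
      · rw [h, top_le_iff] at hup; exact EReal.coe_ne_top _ hup
      · rw [h, le_bot_iff] at hlow; exact EReal.coe_ne_bot _ hlow
    refine ⟨hy, e1, e2, hkk, ?_⟩
    rw [hkk] at hlow
    exact EReal.coe_le_coe_iff.1 hlow
  have hsg : ∀ y, (y, g y) ∈ epiF S G → s y ≤ g y := fun y hy => hG.1.le_of_epiF hS hy
  have hsg' : ∀ y, (y, g' y) ∈ epiF S G' → s y ≤ g' y := fun y hy => hG'.1.le_of_epiF hS hy
  have hkm : AEStronglyMeasurable k ν :=
    (measurable_ereal_toReal.comp measurable_penFun).aestronglyMeasurable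
  -- `μn` is the minimum of `k`, `g` and `g'`
  let mn : (Fin d → ℝ) → ℝ := fun y => min (g y) (g' y)
  have hmn : Integrable mn ν := hgi.inf hgi'
  have hlowint : Integrable (fun y => s y - m * (g y + g' y - 2 * s y)) ν :=
    hs.sub (((hgi.add hgi').sub (hs.const_mul 2)).const_mul m)
  let μn : (Fin d → ℝ) → ℝ := fun y => min (k y) (mn y)
  have hμn : Integrable μn ν := by
    refine integrable_of_le_of_le (hkm.inf hmn.1) ?_ ?_ (hlowint.inf hmn) hmn
    · filter_upwards [hmain] with y hy
      exact min_le_min_right _ hy.2.2.2.2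
    · exact ae_of_all _ fun y => min_le_right _ _
  have hstep : ∀ j : ℝ, m ≤ j → V ≤ (∫ y, μn y ∂ν) + (∫ y, (mn y - s y) ∂ν) / (j - 1) := by
    intro j hj
    have hj1 : 1 < j := by linarith
    have hj0 : 0 < 2 * j + 1 := by linarith
    let α : (Fin d → ℝ) → ℝ := fun y => μn y + (mn y - s y) / (j - 1)
    have hα : Integrable α ν := hμn.add ((hmn.sub hs).div_const _)
    have hdom : ∀ y, y ∈ C → (y, g y) ∈ epiF S G → (y, g' y) ∈ epiF S G' →
        penFun S G G' C m y = (k y : EReal) →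
        ∀ q ∈ penSet S G G' C j, Sb S q.1 y - q.2 ≤ α y := by
      intro y hy h1 h2 hkk q hq
      have hd : 0 ≤ (mn y - s y) / (j - 1) :=
        div_nonneg (sub_nonneg.2 (le_min (hsg y h1) (hsg' y h2))) (by linarith)
      have b1 : Sb S q.1 y - q.2 ≤ k y := by
        obtain ⟨hqC, c, c', hc, hc', hq2⟩ := hq
        have h3 := hG.1.le_of_epiF hS hc
        have h4 := hG'.1.le_of_epiF hS hc'
        have h5 : ((Sb S q.1 y - (Sb S q.1 q.1 / 2 + m * (c + c' - Sb S q.1 q.1)) : ℝ) : EReal)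
            ≤ penFun S G G' C m y :=
          le_iSup₂_of_le (q.1, Sb S q.1 q.1 / 2 + m * (c + c' - Sb S q.1 q.1))
            ⟨hqC, c, c', hc, hc', rfl⟩ le_rfl
        rw [hkk] at h5
        have h5 := EReal.coe_le_coe_iff.1 h5
        have h6 := mul_nonneg (sub_nonneg.2 hj) (by linarith : 0 ≤ c + c' - Sb S q.1 q.1)
        rw [hq2]
        linarith
      have b2 : Sb S q.1 y - q.2 ≤ mn y + (mn y - s y) / (j - 1) := by
        rcases min_choice (g y) (g' y) with h | h
        · simp only [mn, h]
          exact penSet_le hS hG.1 hG'.1 hj1 hq (.inl h1)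
        · simp only [mn, h]
          exact penSet_le hS hG.1 hG'.1 hj1 hq (.inr h2)
      simp only [α, μn]
      rcases min_choice (k y) (mn y) with h | h <;> rw [h] <;> linarith
    obtain ⟨y₀, hy₀⟩ := hmain.exists
    obtain ⟨H, hH, hHle⟩ := exists_maxSMono_avg (G := G) (G' := G') hS hdet hC
      (by linarith : 0 ≤ j) ⟨y₀, hy₀.1, α y₀, g y₀, g' y₀, hy₀.2.1, hy₀.2.2.1,
        hdom y₀ hy₀.1 hy₀.2.1 hy₀.2.2.1 hy₀.2.2.2.1⟩
    have hb : Integrable (fun y => (α y + j * (g y + g' y)) / (2 * j + 1)) ν :=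
      (hα.add ((hgi.add hgi').const_mul j)).div_const _
    have hsum : Integrable (fun y => j * (g y + g' y)) ν := (hgi.add hgi').const_mul j
    have h1 := (hG.2 H hH).trans (eInt_le_coe hb
      (ae_of_all _ fun y => hH.half_le_fitz hS y) (by
        filter_upwards [hmain] with y hy
        exact hHle y hy.1 _ _ _ hy.2.1 hy.2.2.1 (hdom y hy.1 hy.2.1 hy.2.2.1 hy.2.2.2.1)))
    rw [hV, EReal.coe_le_coe_iff, integral_div, integral_add hα hsum,
      integral_const_mul, integral_add hgi hgi', hVV, le_div_iff₀ hj0] at h1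
    have h2 : ∫ y, α y ∂ν = (∫ y, μn y ∂ν) + (∫ y, (mn y - s y) ∂ν) / (j - 1) := by
      have hd : Integrable (fun y => (mn y - s y) / (j - 1)) ν := (hmn.sub hs).div_const _
      rw [← integral_div, ← integral_add hμn hd]
    rw [← h2]
    change V * (2 * j + 1) ≤ (∫ y, α y ∂ν) + j * (V + V) at h1
    linarith
  have hVle : V ≤ ∫ y, μn y ∂ν := by
    suffices 0 ≤ (∫ y, μn y ∂ν) - V by linarith
    -- take `j = 1 + m / r`, which is at least `m` for all `r < 1`
    refine nonneg_of_forall_mul_le (D := -((∫ y, (mn y - s y) ∂ν) / m)) fun r hr hr1 => ?_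
    have hm0 : 0 < m := by linarith
    have hle : m ≤ m / r := by rw [le_div_iff₀ hr]; nlinarith
    have h := hstep (1 + m / r) (by linarith)
    have e : (∫ y, (mn y - s y) ∂ν) / (1 + m / r - 1) = r * ((∫ y, (mn y - s y) ∂ν) / m) := by
      rw [add_sub_cancel_left]; field_simp
    rw [e] at h
    linarith
  have hae : ∀ {f : (Fin d → ℝ) → ℝ}, Integrable f ν → (∀ y, μn y ≤ f y) → ∫ y, f y ∂ν = V →
      μn =ᵐ[ν] f := by
    intro f hf hle hfV
    have h0 : ∫ y, (f y - μn y) ∂ν = 0 := by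
      rw [integral_sub hf hμn, hfV]
      have := integral_mono hμn hf hle
      rw [hfV] at this
      linarith
    have := (integral_eq_zero_iff_of_nonneg (fun y => sub_nonneg.2 (hle y)) (hf.sub hμn)).1 h0
    filter_upwards [this] with y hy
    simp only [Pi.zero_apply] at hy
    linarith
  filter_upwards [hae hgi (fun y => (min_le_right _ _).trans (min_le_left _ _)) rfl,
    hae hgi' (fun y => (min_le_right _ _).trans (min_le_right _ _)) hVV, hmain, hfin, hfin']
    with y h1 h2 h3 h4 h5
  refine ⟨h4.1, ?_, ?_⟩
  · rw [h4.2, h5.2]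
    exact congrArg _ (h1.symm.trans h2)
  · rw [h3.2.2.2.1, h4.2]
    refine EReal.coe_le_coe_iff.2 ?_
    change g y ≤ k y
    rw [← h1]
    exact min_le_left _ _

/-! ### Extension to the support -/

lemma ae_mem_msupp : ∀ᵐ y ∂ν, y ∈ msupp ν := by
  rw [ae_iff]
  refine measure_null_of_locally_null _ fun x hx => ?_
  simp only [msupp, mem_ofPred_eq, not_forall, not_not] at hx
  obtain ⟨U, hU, h0⟩ := hx
  exact ⟨U, mem_nhdsWithin_of_mem_nhds hU, h0⟩

lemma exists_mem_of_ae {p : (Fin d → ℝ) → Prop} (hp : ∀ᵐ y ∂ν, p y) {y : Fin d → ℝ}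
    (hy : y ∈ msupp ν) {U : Set (Fin d → ℝ)} (hU : U ∈ nhds y) : ∃ z ∈ U, p z ∧ z ∈ msupp ν := by
  by_contra! h
  refine hy U hU (measure_mono_null ?_ (ae_iff.1 (hp.and ae_mem_msupp)))
  intro z hz hpz
  exact h z hz hpz.1 hpz.2

/-- For bounded support, `ψ_G` is a.e. dominated by suprema of equi-Lipschitz affine functions
which are themselves bounded by `ψ_{G'}` up to a small error; this passes to limits of points. -/
lemma DualOpt.fitz_le_of_bounded (hS : S.IsHermitian) (hdet : IsUnit S.det)
    [IsProbabilityMeasure ν] (hν : Integrable (fun y => ‖y‖ ^ 2) ν) (hG : DualOpt S ν G)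
    (hG' : DualOpt S ν G') (hb : Bornology.IsBounded (msupp ν)) {y : Fin d → ℝ}
    (hy : y ∈ msupp ν) {c : ℝ} (hc : (y, c) ∈ epiF S G') : (y, c) ∈ epiF S G := by
  obtain ⟨R, hR⟩ := (isBounded_convexHull.2 hb).exists_norm_le
  have hCν : ∀ᵐ y ∂ν, y ∈ convexHull ℝ (msupp ν) :=
    ae_mem_msupp.mono fun y hy => subset_convexHull ℝ _ hy
  intro z hz
  simp only
  -- `S(x, v - y)` tends to `0` as `v` tends to `y`, uniformly over `‖x‖ ≤ R`
  have hsmall : ∀ ε > 0, ∀ᶠ v in nhds y, ∀ x, ‖x‖ ≤ R → |Sb S x (v - y)| < ε := by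
    intro ε hε
    have hK : IsCompact (Metric.closedBall (0 : Fin d → ℝ) R) := isCompact_closedBall _ _
    have := hK.eventually_forall_of_forall_eventually (x₀ := y)
      (P := fun v x => |Sb S x (v - y)| < ε) (fun x _ => by
        have hcont : Continuous fun p : (Fin d → ℝ) × (Fin d → ℝ) => |Sb S p.2 (p.1 - y)| := by
          fun_prop
        refine hcont.continuousAt.eventually_lt continuousAt_const ?_
        simpa [Sb] using hε)
    filter_upwards [this] with v hv x hx
    exact hv x (by simpa using hx)
  have hlim : ∀ m : ℝ, 1 < m → Sb S z y - Sb S z z / 2 ≤ c + (c - Sb S y y / 2) / (m - 1) := by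
    intro m hm
    suffices 0 ≤ c + (c - Sb S y y / 2) / (m - 1) - (Sb S z y - Sb S z z / 2) by linarith
    refine nonneg_of_forall_mul_le (D := -2) fun ε hε _ => ?_
    have hz1 : ∀ᶠ v in nhds y, |Sb S z (v - y)| < ε := by
      have hcont : Continuous fun v => |Sb S z (v - y)| := by fun_prop
      refine hcont.continuousAt.eventually_lt continuousAt_const ?_
      simpa [Sb] using hε
    obtain ⟨v, ⟨hv1, hv2⟩, hv3, -⟩ := exists_mem_of_ae
      (hG.ae_eq_and_le hS hdet hν hG' (convex_convexHull ℝ _) hCν hm) hy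
      ((hsmall ε hε).and hz1)
    have h1 : ((Sb S z v - Sb S z z / 2 : ℝ) : EReal) ≤ fitz S G v :=
      le_iSup₂_of_le z hz le_rfl
    have h2 : penFun S G G' (convexHull ℝ (msupp ν)) m v ≤
        ((c + (c - Sb S y y / 2) / (m - 1) + ε : ℝ) : EReal) := by
      refine iSup₂_le fun q hq => EReal.coe_le_coe_iff.2 ?_
      have h3 := penSet_le hS hG.1 hG'.1 hm hq (.inr hc)
      have h4 := (abs_lt.1 (hv1 q.1 (hR _ hq.1))).2
      rw [Sb_sub_right] at h4
      linarith
    have h5 := EReal.coe_le_coe_iff.1 ((h1.trans hv3.2.2).trans h2)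
    have h6 := (abs_lt.1 hv2).1
    rw [Sb_sub_right] at h6
    linarith
  suffices 0 ≤ c - (Sb S z y - Sb S z z / 2) by linarith
  refine nonneg_of_forall_mul_le (D := -(c - Sb S y y / 2)) fun r hr _ => ?_
  have h := hlim (1 + 1 / r) (by have := one_div_pos.2 hr; linarith)
  have e : (c - Sb S y y / 2) / (1 + 1 / r - 1) = r * (c - Sb S y y / 2) := by
    rw [add_sub_cancel_left]; field_simp
  rw [e] at h
  linarith

/-- For convex support, `ψ_{G'}` is bounded above by some `M` on a nonempty relatively open part
`U` of the support. The segments from `y` to `U` contain points arbitrarily close to `y` at which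
`ψ_G` and `ψ_{G'}` coincide, and convexity bounds `ψ_{G'}` there in terms of `ψ_{G'}(y)`
and `M`. -/
lemma DualOpt.fitz_le_of_convex (hS : S.IsHermitian) (hdet : IsUnit S.det)
    [IsProbabilityMeasure ν] (hν : Integrable (fun y => ‖y‖ ^ 2) ν) (hG : DualOpt S ν G)
    (hG' : DualOpt S ν G') (hconv : Convex ℝ (msupp ν)) {y : Fin d → ℝ}
    (hy : y ∈ msupp ν) {c : ℝ} (hc : (y, c) ∈ epiF S G') : (y, c) ∈ epiF S G := by
  have hae := hG.ae_eq_and_le hS hdet hν hG' hconv ae_mem_msupp one_lt_two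
  set K := msupp ν with hK
  let D : Set (Fin d → ℝ) := {v | (fitz S G v ≠ ⊤ ∧ fitz S G v = fitz S G' v) ∧ v ∈ K}
  have hdense : ∀ v ∈ K, ∀ U ∈ nhds v, ∃ z ∈ U, z ∈ D := by
    intro v hv U hU
    obtain ⟨z, hzU, hz, hzK⟩ := exists_mem_of_ae hae hv hU
    exact ⟨z, hzU, ⟨hz.1, hz.2.1⟩, hzK⟩
  obtain ⟨t, htD, hspan, hind⟩ := exists_affineIndependent ℝ (Fin d → ℝ) D
  have htfin : t.Finite := finite_set_of_fin_dim_affineIndependent ℝ hind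
  have hKspan : K ⊆ affineSpan ℝ t := by
    have hclosed : IsClosed (affineSpan ℝ t : Set (Fin d → ℝ)) :=
      AffineSubspace.closed_of_finiteDimensional _
    intro v hv
    refine hclosed.closure_subset_iff.2 (hspan ▸ subset_affineSpan ℝ D) ?_
    rw [mem_closure_iff_nhds]
    intro U hU
    obtain ⟨z, hz⟩ := hdense v hv U hU
    exact ⟨z, hz⟩
  obtain ⟨M, hM⟩ : ∃ M : ℝ, ∀ v ∈ t, (v, M) ∈ epiF S G' := by
    obtain ⟨M, hM⟩ := (htfin.image fun v => (fitz S G' v).toReal).bddAbove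
    refine ⟨M, fun v hv => fitz_le_coe_iff.1 ?_⟩
    have h := htD hv
    exact (EReal.le_coe_toReal (h.1.2 ▸ h.1.1)).trans
      (EReal.coe_le_coe_iff.2 (hM (mem_image_of_mem _ hv)))
  let s : Set (Fin d → ℝ) := {v | v ∈ K ∧ (v, M) ∈ epiF S G'}
  have hs : Convex ℝ s := by
    rintro v ⟨hv, hvM⟩ w ⟨hw, hwM⟩ a b ha hb hab
    refine ⟨hconv hv hw ha hb hab, ?_⟩
    have := convex_epiF hvM hwM ha hb hab
    simp only [Prod.smul_mk, Prod.mk_add_mk, smul_eq_mul, ← add_mul, hab, one_mul] at this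
    exact this
  have hts : t ⊆ s := fun v hv => ⟨(htD hv).2, hM v hv⟩
  have hKs : K ⊆ affineSpan ℝ s := hKspan.trans (affineSpan_mono ℝ hts)
  have hsne : s.Nonempty := by
    rw [nonempty_iff_ne_empty]
    intro h
    rw [h] at hKs
    simpa using hKs hy
  obtain ⟨u, hu⟩ := hsne.intrinsicInterior hs
  obtain ⟨⟨u', hu's⟩, hu', rfl⟩ := mem_intrinsicInterior.1 hu
  rw [mem_interior_iff_mem_nhds, nhds_subtype, mem_comap] at hu'
  obtain ⟨U, hU, hUs⟩ := hu'
  simp only at hU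
  have huK : u' ∈ K := (intrinsicInterior_subset hu).1
  intro z hz
  simp only
  suffices 0 ≤ c - (Sb S z y - Sb S z z / 2) by linarith
  set L := Sb S z u' - Sb S z z / 2 - 1 with hL
  refine nonneg_of_forall_mul_le
    (D := c - (Sb S z y - Sb S z z / 2) + L - M) fun r hr hr1 => ?_
  have hcont : Continuous fun v => Sb S z v - Sb S z z / 2 := by fun_prop
  have hU' : U ∩ {v | L < Sb S z v - Sb S z z / 2} ∈ nhds u' :=
    inter_mem hU (hcont.continuousAt.eventually (lt_mem_nhds (by simp [hL])))
  -- pull a neighbourhood of `u'` back to one of the point `(1 - r) y + r u'` of the segment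
  have hp : (1 - r) • y + r • u' ∈ K := hconv hy huK (by linarith) hr.le (by ring)
  let φ : (Fin d → ℝ) → (Fin d → ℝ) := fun v => (1 / r) • (v - (1 - r) • y)
  have hφ : Continuous φ := by fun_prop
  have hφp : φ ((1 - r) • y + r • u') = u' := by
    simp only [φ, add_sub_cancel_left, smul_smul]
    rw [one_div_mul_cancel hr.ne', one_smul]
  have hpre : φ ⁻¹' (U ∩ {v | L < Sb S z v - Sb S z z / 2}) ∈ nhds ((1 - r) • y + r • u') :=
    hφ.continuousAt.preimage_mem_nhds (by rw [hφp]; exact hU')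
  obtain ⟨v, ⟨hvU, hvL⟩, ⟨hv1, hv2⟩, hvK⟩ := hdense _ hp _ hpre
  have hv : v = (1 - r) • y + r • φ v := by
    simp only [φ, smul_smul]
    rw [mul_one_div_cancel hr.ne', one_smul, add_sub_cancel]
  have hφs : φ v ∈ s := by
    have hmem : φ v ∈ affineSpan ℝ s := by
      have : φ v = AffineMap.lineMap y v (1 / r) := by
        simp only [φ, AffineMap.lineMap_apply_module, smul_sub, smul_smul]
        have : 1 / r * (1 - r) = 1 / r - 1 := by field_simp
        rw [this]
        module
      rw [this]
      exact AffineMap.lineMap_mem _ (hKs hy) (hKs hvK)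
    exact hUs (show (⟨φ v, hmem⟩ : affineSpan ℝ s) ∈ _ from hvU)
  have h1 : (v, (1 - r) * c + r * M) ∈ epiF S G' := by
    have := convex_epiF hc hφs.2 (by linarith : 0 ≤ 1 - r) hr.le (by ring)
    simp only [Prod.smul_mk, Prod.mk_add_mk, smul_eq_mul] at this
    rw [hv]
    exact this
  have h2 : (v, (1 - r) * c + r * M) ∈ epiF S G := by
    rw [← fitz_le_coe_iff] at h1 ⊢
    rwa [hv2]
  have h3 := h2 z hz
  simp only at h3
  have h4 : Sb S z v = (1 - r) * Sb S z y + r * Sb S z (φ v) := by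
    conv_lhs => rw [hv]
    rw [Sb_add_right, Sb_smul_right, Sb_smul_right]
  rw [h4] at h3
  have h5 : L < Sb S z (φ v) - Sb S z z / 2 := hvL
  have h6 := mul_le_mul_of_nonneg_left h5.le hr.le
  nlinarith

end Uniqueness

/-- Theorem 5: if the support of `ν` is bounded or convex, then the
dual problem has a unique solution over `supp ν`: any two optimal maximal `S`-monotone
sets `G`, `G̃` satisfy `ψ_G = ψ_{G̃}` on `supp ν` and `G ∩ supp ν = G̃ ∩ supp ν`.
In particular, if `supp ν` is convex and some optimal set is contained in `supp ν`, then
it is the unique optimal set. -/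
theorem dual_uniqueness_on_support
    (d m : ℕ) (S : Matrix (Fin d) (Fin d) ℝ) (hS : S.IsHermitian)
    (hrank : IsUnit S.det)
    (hm : Nat.card {i : Fin d // 0 < hS.eigenvalues i} = m)
    (ν : Measure (Fin d → ℝ)) [IsProbabilityMeasure ν]
    (hν : Integrable (fun y => ‖y‖ ^ 2) ν)
    (hsupp : Bornology.IsBounded (msupp ν) ∨ Convex ℝ (msupp ν)) :
    (∀ G G', DualOpt S ν G → DualOpt S ν G' →
      (∀ y ∈ msupp ν, fitz S G y = fitz S G' y) ∧
        G ∩ msupp ν = G' ∩ msupp ν) ∧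
    (Convex ℝ (msupp ν) →
      ∀ G, DualOpt S ν G → G ⊆ msupp ν →
        ∀ G', DualOpt S ν G' → G' = G) := by
  have hle : ∀ G G', DualOpt S ν G → DualOpt S ν G' → ∀ y ∈ msupp ν,
      fitz S G y ≤ fitz S G' y := by
    intro G G' hG hG' y hy
    refine EReal.le_of_forall_lt_iff_le.1 fun c hc => ?_
    have hc' := fitz_le_coe_iff.1 hc.le
    rw [fitz_le_coe_iff]
    rcases hsupp with hb | hconv
    · exact hG.fitz_le_of_bounded hS hrank hν hG' hb hy hc'
    · exact hG.fitz_le_of_convex hS hrank hν hG' hconv hy hc'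
  have huniq : ∀ G G', DualOpt S ν G → DualOpt S ν G' →
      (∀ y ∈ msupp ν, fitz S G y = fitz S G' y) ∧ G ∩ msupp ν = G' ∩ msupp ν := by
    intro G G' hG hG'
    have heq : ∀ y ∈ msupp ν, fitz S G y = fitz S G' y := fun y hy =>
      (hle G G' hG hG' y hy).antisymm (hle G' G hG' hG y hy)
    refine ⟨heq, ?_⟩
    ext y
    refine and_congr_left fun hy => ?_
    rw [hG.1.mem_iff_fitz hS, hG'.1.mem_iff_fitz hS, heq y hy]
  refine ⟨huniq, fun _ G hG hGs G' hG' => hG.1.2 G' hG'.1.1 fun y hy => ?_⟩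
  have h : y ∈ G' ∩ msupp ν := (huniq G G' hG hG').2 ▸ ⟨hy, hGs hy⟩
  exact h.1

end
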